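/- arXiv:2001.09384 — 8 statements merged into one kernel-verified Lean document; each statement's English description precedes it below -/
import Mathlib

section
/- Let φ be a normalized symmetric Bayes risk and let m ≥ 2 be an integer. Then for every v with 0 < v ≤ m + 1 and every u with 0 < u ≤ min{1, v}, one has v·φ(u/v) ≤ (m+1)·φ(1/(m+1)). -/
/-!
Put `M = m + 1`. Concavity and `φ 0 = 0` make `v ↦ v * φ (u / v)` nondecreasing, so `v` may be
replaced by `M`. Concavity and symmetry make `φ` nondecreasing on `[0, 1/2]`: a point
`b ∈ [a, 1 - a]` satisfies `φ b ≥ min (φ a) (φ (1 - a)) = φ a`. Since `u / M ≤ 1 / M ≤ 1 / 2`,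
`u` may then be replaced by `1`.
-/

/-- For a normalized symmetric Bayes risk `φ` and an integer `m ≥ 2`,
for every `0 < v ≤ m + 1` and `0 < u ≤ min 1 v`, one has
`v·φ(u/v) ≤ (m+1)·φ(1/(m+1))`. -/
theorem perspective_le_at_one_over_m_add_one
    (φ : ℝ → ℝ)
    (hconc : ConcaveOn ℝ (Set.Icc (0:ℝ) 1) φ)
    (hsym : ∀ u ∈ Set.Icc (0:ℝ) 1, φ u = φ (1 - u))
    (h0 : φ 0 = 0)
    (hhalf : φ (1/2) = 1)
    (m : ℕ) (hm : 2 ≤ m) :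
    ∀ v u : ℝ, 0 < v → v ≤ (m : ℝ) + 1 → 0 < u → u ≤ min 1 v →
      v * φ (u / v) ≤ ((m : ℝ) + 1) * φ (1 / ((m : ℝ) + 1)) := by
  intro v u hv hvM hu huv
  obtain ⟨hu1, huv⟩ := le_min_iff.mp huv
  have hm' : (2 : ℝ) ≤ m := by exact_mod_cast hm
  generalize hM : (m : ℝ) + 1 = M at *
  have hM3 : 3 ≤ M := by linarith
  have hM0 : 0 < M := by linarith
  have step1 : v * φ (u / v) ≤ M * φ (u / M) := by
    have hmem : u / v ∈ Set.Icc (0 : ℝ) 1 := ⟨by positivity, (div_le_one hv).mpr huv⟩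
    -- `u / M` is the convex combination of `u / v` and `0` with weights `v / M` and `1 - v / M`.
    have h := hconc.2 hmem (Set.left_mem_Icc.mpr zero_le_one)
      (show 0 ≤ v / M by positivity) (sub_nonneg.mpr ((div_le_one hM0).mpr hvM))
      (add_sub_cancel _ _)
    have e : v / M * (u / v) = u / M := by field_simp
    simp only [smul_eq_mul, h0, mul_zero, add_zero, e] at h
    calc v * φ (u / v) = M * (v / M * φ (u / v)) := by field_simp
      _ ≤ M * φ (u / M) := by gcongr
  have step2 : φ (u / M) ≤ φ (1 / M) := by
    have hle : u / M ≤ 1 / M := by gcongr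
    have hpos : 0 < u / M := by positivity
    have hthird : 1 / M ≤ 1 / 3 := by gcongr
    have ha : u / M ∈ Set.Icc (0 : ℝ) 1 := ⟨by linarith, by linarith⟩
    have hb : 1 - u / M ∈ Set.Icc (0 : ℝ) 1 := ⟨by linarith, by linarith⟩
    have h := hconc.min_le_of_mem_Icc ha hb (z := 1 / M) ⟨hle, by linarith⟩
    rwa [← hsym _ ha, min_self] at h
  exact step1.trans (by gcongr)
end

section
/- Let m ≥ 2 be an integer and let φ be a normalized symmetric Bayes risk. Define f(a, w) = w·φ(a/w) for reals 0 ≤ a ≤ w with w > 0. Suppose 0 ≤ a ≤ w ≤ m with w > 0, let δ ∈ (0, 1], and suppose the pair (a′, w′) arises from (a, w) in one of the three ways: (i) a′ = a + δ ≤ w and w′ = w; (ii) a′ = a + δ and w′ = w + δ; or (iii) a′ = a and w′ = w + δ. Then |f(a′, w′) − f(a, w)| ≤ max{3, 1 + (m+1)·φ(1/(m+1))}. (This is the sensitivity bound Δ_φ ≤ max{3, 1 + φ̌(1, m+1)} for the per-leaf weighted Bayes risk under a change of one example of a weighted sample of at most m examples with weights in (0,1]: the three cases correspond to a class flip, an example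 addition of class 1, and an example addition of class −1 at the leaf.) -/
/-!
In the coordinates `x = a`, `y = w - a` (class weights), the leaf criterion is
`F x y = (x + y) * φ (x / (x + y))`, the perspective of a concave function: it is positively
homogeneous and superadditive on the nonnegative quadrant, symmetric, and zero on the axes.
Hence `F` is monotone in each variable (`leafRisk_mono`), and monotonicity with homogeneity gives
`F x (y + d) ≤ F x y + F x d` (`leafRisk_add_right_le`). An increment of
one class weight by `δ ≤ 1` therefore changes `F` by a nonnegative amount that is at most
`F 1 m = (m + 1) * φ (1 / (m + 1))`. A class flip raises one weight and lowers the other by the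
same amount; the two changes have opposite signs, so the flip obeys the same bound. This bound is
below the one claimed.
-/

/-- The leaf criterion as a function of the weights `x`, `y` of the two classes.
At `x = y = 0` the value is `0`. -/
noncomputable def leafRisk (φ : ℝ → ℝ) (x y : ℝ) : ℝ := (x + y) * φ (x / (x + y))

lemma leafRisk_smul (φ : ℝ → ℝ) (t x y : ℝ) :
    leafRisk φ (t * x) (t * y) = t * leafRisk φ x y := by
  unfold leafRisk
  rcases eq_or_ne t 0 with rfl | ht
  · simp
  · rw [← mul_add, mul_div_mul_left _ _ ht, mul_assoc]

lemma leafRisk_zero_left {φ : ℝ → ℝ} (h0 : φ 0 = 0) (y : ℝ) : leafRisk φ 0 y = 0 := by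
  simp [leafRisk, h0]

lemma leafRisk_comm {φ : ℝ → ℝ} (hsym : ∀ u ∈ Set.Icc (0:ℝ) 1, φ u = φ (1 - u))
    {x y : ℝ} (hx : 0 ≤ x) (hy : 0 ≤ y) : leafRisk φ x y = leafRisk φ y x := by
  unfold leafRisk
  rcases (add_nonneg hx hy).eq_or_lt with h | h
  · rw [← h, add_comm y x, ← h]; simp
  · have hmem : x / (x + y) ∈ Set.Icc (0:ℝ) 1 :=
      ⟨by positivity, (div_le_one h).2 (by linarith)⟩
    have hcompl : 1 - x / (x + y) = y / (y + x) := by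
      rw [add_comm y x]; field_simp; ring
    rw [hsym _ hmem, hcompl, add_comm x y]

/-- Superadditivity of the perspective of a concave function. -/
lemma leafRisk_superadd {φ : ℝ → ℝ} (hconc : ConcaveOn ℝ (Set.Icc (0:ℝ) 1) φ)
    {x y x' y' : ℝ} (hx : 0 ≤ x) (hy : 0 ≤ y) (hx' : 0 ≤ x') (hy' : 0 ≤ y') :
    leafRisk φ x y + leafRisk φ x' y' ≤ leafRisk φ (x + x') (y + y') := by
  rcases (add_nonneg hx hy).eq_or_lt with h | h
  · obtain rfl : x = 0 := by linarith
    obtain rfl : y = 0 := by linarith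
    simp [leafRisk]
  rcases (add_nonneg hx' hy').eq_or_lt with h' | h'
  · obtain rfl : x' = 0 := by linarith
    obtain rfl : y' = 0 := by linarith
    simp [leafRisk]
  have hs : 0 < (x + y) + (x' + y') := by linarith
  have hmem : x / (x + y) ∈ Set.Icc (0:ℝ) 1 :=
    ⟨by positivity, (div_le_one h).2 (by linarith)⟩
  have hmem' : x' / (x' + y') ∈ Set.Icc (0:ℝ) 1 :=
    ⟨by positivity, (div_le_one h').2 (by linarith)⟩
  have hp : 0 ≤ (x + y) / ((x + y) + (x' + y')) := by positivity
  have hq : 0 ≤ (x' + y') / ((x + y) + (x' + y')) := by positivity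
  have key := hconc.2 hmem hmem' hp hq (by rw [← add_div, div_self hs.ne'])
  simp only [smul_eq_mul] at key
  have harg : (x + y) / ((x + y) + (x' + y')) * (x / (x + y))
      + (x' + y') / ((x + y) + (x' + y')) * (x' / (x' + y'))
      = (x + x') / ((x + x') + (y + y')) := by
    rw [show (x + x') + (y + y') = (x + y) + (x' + y') by ring]
    field_simp
  rw [harg] at key
  have hmul := mul_le_mul_of_nonneg_left key hs.le
  unfold leafRisk
  rw [show (x + x') + (y + y') = (x + y) + (x' + y') by ring] at hmul ⊢
  refine le_trans (le_of_eq ?_) hmul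
  field_simp

/-- Monotonicity in the second weight: adding a pure leaf, whose risk is zero, cannot lower the
risk, by superadditivity. -/
lemma leafRisk_mono_right {φ : ℝ → ℝ} (hconc : ConcaveOn ℝ (Set.Icc (0:ℝ) 1) φ)
    (h0 : φ 0 = 0) {x y z : ℝ} (hx : 0 ≤ x) (hy : 0 ≤ y) (hyz : y ≤ z) :
    leafRisk φ x y ≤ leafRisk φ x z := by
  have h := leafRisk_superadd hconc hx hy le_rfl (sub_nonneg.2 hyz)
  rw [leafRisk_zero_left h0] at h
  simpa using h

lemma leafRisk_mono {φ : ℝ → ℝ} (hconc : ConcaveOn ℝ (Set.Icc (0:ℝ) 1) φ)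
    (hsym : ∀ u ∈ Set.Icc (0:ℝ) 1, φ u = φ (1 - u)) (h0 : φ 0 = 0)
    {x y x' y' : ℝ} (hx : 0 ≤ x) (hy : 0 ≤ y) (hxx' : x ≤ x') (hyy' : y ≤ y') :
    leafRisk φ x y ≤ leafRisk φ x' y' := by
  have hx' := hx.trans hxx'
  calc leafRisk φ x y = leafRisk φ y x := leafRisk_comm hsym hx hy
    _ ≤ leafRisk φ y x' := leafRisk_mono_right hconc h0 hy hx hxx'
    _ = leafRisk φ x' y := leafRisk_comm hsym hy hx'
    _ ≤ leafRisk φ x' y' := leafRisk_mono_right hconc h0 hx' hy hyy'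

/-- Scaling the second weight by `t ∈ [0, 1]` scales the risk by at least `t`: scaling both weights
scales it by exactly `t`, and restoring the first one does not lower it. -/
lemma mul_leafRisk_le {φ : ℝ → ℝ} (hconc : ConcaveOn ℝ (Set.Icc (0:ℝ) 1) φ)
    (hsym : ∀ u ∈ Set.Icc (0:ℝ) 1, φ u = φ (1 - u)) (h0 : φ 0 = 0)
    {x y t : ℝ} (hx : 0 ≤ x) (hy : 0 ≤ y) (ht0 : 0 ≤ t) (ht1 : t ≤ 1) :
    t * leafRisk φ x y ≤ leafRisk φ x (t * y) := by
  rw [← leafRisk_smul]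
  exact leafRisk_mono hconc hsym h0 (by positivity) (by positivity)
    (mul_le_of_le_one_left hx ht1) le_rfl

/-- Subadditivity in the second weight: the increment over a step `d` is largest at `y = 0`. -/
lemma leafRisk_add_right_le {φ : ℝ → ℝ} (hconc : ConcaveOn ℝ (Set.Icc (0:ℝ) 1) φ)
    (hsym : ∀ u ∈ Set.Icc (0:ℝ) 1, φ u = φ (1 - u)) (h0 : φ 0 = 0)
    {x y d : ℝ} (hx : 0 ≤ x) (hy : 0 ≤ y) (hd : 0 < d) :
    leafRisk φ x (y + d) ≤ leafRisk φ x y + leafRisk φ x d := by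
  have hs : 0 < y + d := by linarith
  have h1 := mul_leafRisk_le hconc hsym h0 (t := y / (y + d)) hx hs.le (by positivity)
    ((div_le_one hs).2 (by linarith))
  have h2 := mul_leafRisk_le hconc hsym h0 (t := d / (y + d)) hx hs.le (by positivity)
    ((div_le_one hs).2 (by linarith))
  rw [div_mul_cancel₀ _ hs.ne'] at h1 h2
  have hsum : y / (y + d) * leafRisk φ x (y + d) + d / (y + d) * leafRisk φ x (y + d)
      = leafRisk φ x (y + d) := by
    rw [← add_mul, ← add_div, div_self hs.ne', one_mul]
  linarith

/-- Sensitivity bound for the per-leaf weighted Bayes risk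
`f(a, w) = w·φ(a/w)` under a change of one example (of weight `δ ∈ (0,1]`) of a weighted
sample of at most `m` examples: in each of the three neighboring cases (class flip,
addition of a positive example, addition of a negative example),
`|f(a′, w′) − f(a, w)| ≤ max{3, 1 + (m+1)·φ(1/(m+1))}`. -/
theorem bayes_risk_sensitivity
    (φ : ℝ → ℝ)
    (hconc : ConcaveOn ℝ (Set.Icc (0:ℝ) 1) φ)
    (hsym : ∀ u ∈ Set.Icc (0:ℝ) 1, φ u = φ (1 - u))
    (h0 : φ 0 = 0)
    (hhalf : φ (1/2) = 1)
    (m : ℕ) (hm : 2 ≤ m)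
    (a w a' w' δ : ℝ)
    (ha : 0 ≤ a) (haw : a ≤ w) (hwm : w ≤ (m : ℝ)) (hw : 0 < w)
    (hδ0 : 0 < δ) (hδ1 : δ ≤ 1)
    (hcase :
      (a' = a + δ ∧ a + δ ≤ w ∧ w' = w) ∨
      (a' = a + δ ∧ w' = w + δ) ∨
      (a' = a ∧ w' = w + δ)) :
    |w' * φ (a' / w') - w * φ (a / w)| ≤
      max 3 (1 + ((m : ℝ) + 1) * φ (1 / ((m : ℝ) + 1))) := by
  have hy : 0 ≤ w - a := sub_nonneg.2 haw
  have hF : ∀ b v : ℝ, v * φ (b / v) = leafRisk φ b (v - b) := by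
    intro b v; simp [leafRisk]
  have hK : ((m : ℝ) + 1) * φ (1 / ((m : ℝ) + 1)) = leafRisk φ m 1 := by
    rw [leafRisk_comm hsym (Nat.cast_nonneg m) zero_le_one, leafRisk, add_comm (1:ℝ)]
  -- The increment caused by a step `δ` in one class weight.
  have hup : ∀ x y : ℝ, 0 ≤ x → 0 ≤ y → x ≤ m →
      leafRisk φ x (y + δ) ≤ leafRisk φ x y + leafRisk φ m 1 := fun x y hx hy hxm =>
    (leafRisk_add_right_le hconc hsym h0 hx hy hδ0).trans
      (add_le_add_right (leafRisk_mono hconc hsym h0 hx hδ0.le hxm hδ1) _)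
  have hup' : ∀ x y : ℝ, 0 ≤ x → 0 ≤ y → y ≤ m →
      leafRisk φ (x + δ) y ≤ leafRisk φ x y + leafRisk φ m 1 := fun x y hx hy hym => by
    rw [leafRisk_comm hsym (by linarith) hy, leafRisk_comm hsym hx hy]
    exact hup y x hy hx hym
  refine le_trans ?_ (le_max_right _ _)
  rw [hF, hF, hK]
  suffices h : |leafRisk φ a' (w' - a') - leafRisk φ a (w - a)| ≤ leafRisk φ m 1 by linarith
  rw [abs_le]
  rcases hcase with ⟨rfl, hle, rfl⟩ | ⟨rfl, rfl⟩ | ⟨rfl, rfl⟩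
  · -- Both endpoints of the flip are compared with the leaf `(a, w - a - δ)` lying below them.
    obtain ⟨z, hz⟩ : ∃ z, z = w' - (a + δ) := ⟨_, rfl⟩
    have hz0 : 0 ≤ z := by linarith
    rw [← hz, show w' - a = z + δ by linarith]
    have h1 := hup a z ha hz0 (by linarith)
    have h2 := hup' a z ha hz0 (by linarith)
    have h3 := leafRisk_mono hconc hsym h0 ha hz0 le_rfl (show z ≤ z + δ by linarith)
    have h4 := leafRisk_mono hconc hsym h0 ha hz0 (show a ≤ a + δ by linarith) le_rfl
    constructor <;> linarith
  · rw [show w + δ - (a + δ) = w - a by ring]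
    have h1 := hup' a (w - a) ha hy (by linarith)
    have h2 := leafRisk_mono hconc hsym h0 ha hy (show a ≤ a + δ by linarith) le_rfl
    constructor <;> linarith
  · rw [show w + δ - a' = w - a' + δ by ring]
    have h1 := hup a' (w - a') ha hy (by linarith)
    have h2 := leafRisk_mono hconc hsym h0 ha hy le_rfl (show w - a' ≤ w - a' + δ by linarith)
    constructor <;> linarith
end

section
/- Let α ∈ (0,1]. For every real z, the supremum over u ∈ [0,1] of z·u + 2α·√(u(1−u)) + 2(1−α)·min{u, 1−u} (the Legendre conjugate of the negative Mα Bayes risk, evaluated at z) is equal to ℓ_α(z) = 1 + z/2 + 𝟙[|z| > 2(1−α)]·(√(α² + (|z|/2 − (1−α))²) − α), where 𝟙[·] denotes the indicator. -/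
/-!
Substituting `u = (1 + t) / 2` with `t ∈ [-1, 1]` turns the objective into
`z/2 + (1 - α) + α √(1 - t²) + (z t / 2 - (1 - α) |t|)`. With `w = |z|/2 - (1 - α)` this is at
most `z/2 + (1 - α) + α √(1 - t²) + w |t|`. If `w ≤ 0`, the last two terms are at most `α`, with
equality at `t = 0`. If `w > 0`, they are at most `√(α² + w²)` by Cauchy–Schwarz, with equality
when `|t| = w / √(α² + w²)` and `t` has the sign of `z`. In both cases the supremum is attained.
-/

/-- The objective in the centred coordinate `t = 2u - 1`. -/
lemma malpha_objective_centred (α z t : ℝ) :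
    z * ((1 + t) / 2) + 2 * α * Real.sqrt ((1 + t) / 2 * (1 - (1 + t) / 2))
        + 2 * (1 - α) * min ((1 + t) / 2) (1 - (1 + t) / 2)
      = z / 2 + (1 - α) + α * Real.sqrt (1 - t ^ 2) + (z * t / 2 - (1 - α) * |t|) := by
  have hsqrt : Real.sqrt ((1 + t) / 2 * (1 - (1 + t) / 2)) = Real.sqrt (1 - t ^ 2) / 2 := by
    rw [show (1 + t) / 2 * (1 - (1 + t) / 2) = (1 - t ^ 2) / 2 ^ 2 by ring,
      Real.sqrt_div' _ (by positivity), Real.sqrt_sq (by norm_num)]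
  have hmin : min ((1 + t) / 2) (1 - (1 + t) / 2) = (1 - |t|) / 2 := by
    rcases le_total 0 t with h | h
    · rw [abs_of_nonneg h, min_eq_right (by linarith)]; ring
    · rw [abs_of_nonpos h, min_eq_left (by linarith)]; ring
  rw [hsqrt, hmin]
  ring

/-- For `α ∈ (0,1]` and every real `z`, the Legendre conjugate of the
negative Mα Bayes risk, `sup_{u∈[0,1]} {z·u + 2α√(u(1−u)) + 2(1−α)·min{u,1−u}}`,
equals `ℓ_α(z) = 1 + z/2 + 𝟙[|z| > 2(1−α)]·(√(α² + (|z|/2 − (1−α))²) − α)`. -/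
theorem malpha_legendre_conjugate
    (α : ℝ) (hα : α ∈ Set.Ioc (0:ℝ) 1) (z : ℝ) :
    sSup ((fun u : ℝ =>
        z * u + 2 * α * Real.sqrt (u * (1 - u)) + 2 * (1 - α) * min u (1 - u)) ''
          Set.Icc (0:ℝ) 1)
      = 1 + z / 2 +
          (if 2 * (1 - α) < |z| then
            Real.sqrt (α ^ 2 + (|z| / 2 - (1 - α)) ^ 2) - α
          else 0) := by
  obtain ⟨hα0, hα1⟩ := hα
  apply IsGreatest.csSup_eq
  constructor
  · split_ifs with h
    · set w := |z| / 2 - (1 - α) with hw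
      have hw0 : 0 < w := by linarith
      set R := Real.sqrt (α ^ 2 + w ^ 2) with hR
      have hR0 : 0 < R := Real.sqrt_pos.2 (by positivity)
      have hR2 : R ^ 2 = α ^ 2 + w ^ 2 := Real.sq_sqrt (by positivity)
      -- The maximizer has modulus `w / R` and the sign of `z`.
      obtain ⟨t, ht, hzt⟩ : ∃ t : ℝ, |t| = w / R ∧ z * t = |z| * (w / R) := by
        rcases le_total 0 z with hz | hz
        · exact ⟨w / R, abs_of_pos (by positivity), by rw [abs_of_nonneg hz]⟩
        · exact ⟨-(w / R), by rw [abs_neg, abs_of_pos (by positivity)],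
            by rw [abs_of_nonpos hz]; ring⟩
      have hsqrt : Real.sqrt (1 - t ^ 2) = α / R := by
        rw [← sq_abs t, ht, show 1 - (w / R) ^ 2 = (α / R) ^ 2 by
          field_simp; linarith, Real.sqrt_sq (by positivity)]
      have hle : |t| ≤ 1 := by
        rw [ht, div_le_one hR0]
        nlinarith
      obtain ⟨h1, h2⟩ := abs_le.1 hle
      refine ⟨(1 + t) / 2, ⟨by linarith, by linarith⟩, ?_⟩
      refine (malpha_objective_centred α z t).trans ?_
      have hval : α * (α / R) + w * (w / R) = R := by
        field_simp; linarith
      rw [hsqrt, hzt, ht]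
      linear_combination hval - (w / R) * hw
    · refine ⟨(1 + 0) / 2, ⟨by norm_num, by norm_num⟩, ?_⟩
      refine (malpha_objective_centred α z 0).trans ?_
      simp
      ring
  · rintro _ ⟨u, ⟨hu0, hu1⟩, rfl⟩
    obtain ⟨t, rfl⟩ : ∃ t : ℝ, u = (1 + t) / 2 := ⟨2 * u - 1, by ring⟩
    refine (malpha_objective_centred α z t).le.trans ?_
    have hzt : z * t ≤ |z| * |t| := by rw [← abs_mul]; exact le_abs_self _
    have hs2 : Real.sqrt (1 - t ^ 2) ^ 2 = 1 - |t| ^ 2 := by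
      rw [Real.sq_sqrt (by nlinarith), sq_abs]
    have hs0 := Real.sqrt_nonneg (1 - t ^ 2)
    have ht0 := abs_nonneg t
    generalize Real.sqrt (1 - t ^ 2) = s at *
    split_ifs with h
    · -- Cauchy–Schwarz for `(α, w)` against the unit vector `(s, |t|)`.
      have hcs : α * s + (|z| / 2 - (1 - α)) * |t|
          ≤ Real.sqrt (α ^ 2 + (|z| / 2 - (1 - α)) ^ 2) := by
        apply Real.le_sqrt_of_sq_le
        generalize |z| / 2 - (1 - α) = w
        have hid : α ^ 2 + w ^ 2 = (α * s + w * |t|) ^ 2 + (α * |t| - w * s) ^ 2 := by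
          linear_combination (-(α ^ 2) - w ^ 2) * hs2
        linarith [sq_nonneg (α * |t| - w * s)]
      linarith
    · have hs1 : s ≤ 1 := by nlinarith
      have hw : (|z| / 2 - (1 - α)) * |t| ≤ 0 :=
        mul_nonpos_of_nonpos_of_nonneg (by linarith) ht0
      nlinarith
end

section
/- Let α ∈ (0,1]. The function ℓ_α : ℝ → ℝ defined by ℓ_α(z) = 1 + z/2 + 𝟙[|z| > 2(1−α)]·(√(α² + (|z|/2 − (1−α))²) − α) is differentiable at every z ∈ ℝ, with derivative ℓ_α′(z) = (1/2)·(1 + 𝟙[|z| > 2(1−α)]·sign(z)·((|z|/2 − (1−α)) / √(α² + (|z|/2 − (1−α))²))); moreover ℓ_α′(z) ∈ (0,1) for every z. (The derivative ℓ_α′ is the inverse canonical link of the Mα-loss.) -/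
/-!
Write `c = 1 - α ≥ 0` and `x⁺ = max x 0`. Since `c ≥ 0`, at most one of `z/2 - c` and `-z/2 - c` is
positive, so the indicator can be absorbed:
`ℓ z = 1 + z/2 + √(α² + ((z/2 - c)⁺)² + ((-z/2 - c)⁺)²) - α`.
The function `x ↦ (x⁺)²` is differentiable everywhere with derivative `2 x⁺`
(`hasDerivAt_max_zero_sq`), and the radicand is at least `α² > 0`, so the chain rule applies at
every `z`, the breakpoints `|z| = 2c` included. The derivative lies in `(0,1)` because
`|t| < √(α² + t²)`.
-/

lemma hasDerivAt_max_zero_sq (x : ℝ) :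
    HasDerivAt (fun y : ℝ => (max y 0) ^ 2) (2 * max x 0) x := by
  rw [hasDerivAt_iff_isLittleO]
  have hO : (fun y : ℝ => (max y 0) ^ 2 - (max x 0) ^ 2 - (y - x) • (2 * max x 0))
      =O[nhds x] fun y => (y - x) ^ 2 := by
    refine Asymptotics.IsBigO.of_bound 1 (Filter.Eventually.of_forall fun y => ?_)
    rw [Real.norm_eq_abs, Real.norm_eq_abs, abs_of_nonneg (sq_nonneg (y - x)), smul_eq_mul, abs_le]
    rcases le_total x 0 with hx | hx <;> rcases le_total y 0 with hy | hy <;>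
      simp only [max_eq_left, max_eq_right, hx, hy] <;> constructor <;>
      nlinarith [sq_nonneg (y - x), sq_nonneg x, sq_nonneg y]
  refine hO.trans_isLittleO ?_
  have h : Filter.Tendsto (fun y : ℝ => y - x) (nhds x) (nhds 0) := by
    have : ContinuousAt (fun y : ℝ => y - x) x := by fun_prop
    simpa [ContinuousAt] using this
  exact (Asymptotics.isLittleO_pow_id one_lt_two).comp_tendsto h

/-- For `c ≥ 0` the two positive parts have disjoint supports, so the sum of their squares and their
difference depend only on `|z|/2 - c`, the threshold indicator and the sign of `z`. -/
lemma posPart_pair {c : ℝ} (hc : 0 ≤ c) (z : ℝ) :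
    (max (z / 2 - c) 0) ^ 2 + (max (-z / 2 - c) 0) ^ 2 =
        (if 2 * c < |z| then (|z| / 2 - c) ^ 2 else 0) ∧
      max (z / 2 - c) 0 - max (-z / 2 - c) 0 =
        (if 2 * c < |z| then (1:ℝ) else 0) * Real.sign z * (|z| / 2 - c) := by
  split_ifs with h
  · rcases lt_trichotomy z 0 with hz | hz | hz
    · rw [abs_of_neg hz] at h ⊢
      rw [max_eq_right (by linarith), max_eq_left (by linarith), Real.sign_of_neg hz]
      constructor <;> ring
    · subst hz
      rw [abs_zero] at h
      linarith
    · rw [abs_of_pos hz] at h ⊢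
      rw [max_eq_left (by linarith), max_eq_right (by linarith), Real.sign_of_pos hz]
      constructor <;> ring
  · have h' := abs_le.1 (not_lt.1 h)
    rw [max_eq_right (by linarith), max_eq_right (by linarith)]
    constructor <;> ring

/-- For `α ∈ (0,1]`, the function
`ℓ_α(z) = 1 + z/2 + 𝟙[|z| > 2(1−α)]·(√(α² + (|z|/2 − (1−α))²) − α)` is differentiable
everywhere, with derivative
`ℓ_α′(z) = (1/2)(1 + 𝟙[|z| > 2(1−α)]·sign(z)·((|z|/2 − (1−α))/√(α² + (|z|/2 − (1−α))²)))`,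
which moreover lies in `(0,1)` for every `z`. -/
theorem malpha_conjugate_hasDerivAt
    (α : ℝ) (hα : α ∈ Set.Ioc (0:ℝ) 1)
    (ℓ : ℝ → ℝ)
    (hℓ : ∀ z : ℝ, ℓ z = 1 + z / 2 +
      (if 2 * (1 - α) < |z| then
        Real.sqrt (α ^ 2 + (|z| / 2 - (1 - α)) ^ 2) - α
      else 0)) :
    ∀ z : ℝ,
      HasDerivAt ℓ
        ((1/2) * (1 + (if 2 * (1 - α) < |z| then (1:ℝ) else 0) * Real.sign z *
          ((|z| / 2 - (1 - α)) / Real.sqrt (α ^ 2 + (|z| / 2 - (1 - α)) ^ 2)))) z ∧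
      (1/2) * (1 + (if 2 * (1 - α) < |z| then (1:ℝ) else 0) * Real.sign z *
          ((|z| / 2 - (1 - α)) / Real.sqrt (α ^ 2 + (|z| / 2 - (1 - α)) ^ 2)))
        ∈ Set.Ioo (0:ℝ) 1 := by
  obtain ⟨hα0, hα1⟩ := hα
  have hc : 0 ≤ 1 - α := by linarith
  intro z
  constructor
  · have hfun : ℓ = fun z => 1 + z / 2 +
        (Real.sqrt (α ^ 2 + ((max (z / 2 - (1 - α)) 0) ^ 2 + (max (-z / 2 - (1 - α)) 0) ^ 2))
          - α) := by
      funext y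
      rw [hℓ, (posPart_pair hc y).1]
      split_ifs
      · rfl
      · rw [add_zero (α ^ 2), Real.sqrt_sq hα0.le, sub_self]
    have hl : HasDerivAt (fun z : ℝ => z / 2 - (1 - α)) (1 / 2) z :=
      ((hasDerivAt_id z).div_const 2).sub_const _
    have hr : HasDerivAt (fun z : ℝ => -z / 2 - (1 - α)) (-1 / 2) z :=
      ((hasDerivAt_id z).neg.div_const 2).sub_const _
    have hq := ((hasDerivAt_max_zero_sq _).comp z hl).add ((hasDerivAt_max_zero_sq _).comp z hr)
    have hs := (hq.const_add (α ^ 2)).sqrt (ne_of_gt (by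
      simp only [Function.comp, Pi.add_apply]
      positivity))
    have hd := (((hasDerivAt_id z).div_const 2).const_add 1).add (hs.sub_const α)
    rw [hfun]
    refine hd.congr_deriv ?_
    obtain ⟨h1, h2⟩ := posPart_pair hc z
    rw [← mul_div_assoc (_ * Real.sign z), ← h2]
    simp only [Function.comp, Pi.add_apply, h1]
    split_ifs with h
    · ring
    · -- Below the threshold both positive parts vanish, so the denominators do not matter.
      have h' := abs_le.1 (not_lt.1 h)
      rw [max_eq_right (by linarith), max_eq_right (by linarith)]
      simp
  · set t := |z| / 2 - (1 - α)
    have hS : |t| < Real.sqrt (α ^ 2 + t ^ 2) := by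
      rw [← Real.sqrt_sq_eq_abs]
      exact Real.sqrt_lt_sqrt (sq_nonneg t) (by nlinarith)
    have hS0 := (abs_nonneg t).trans_lt hS
    obtain ⟨hlo, hhi⟩ := abs_lt.1 hS
    have hlo' : -1 < t / Real.sqrt (α ^ 2 + t ^ 2) := by
      rw [lt_div_iff₀ hS0]
      linarith
    have hhi' : t / Real.sqrt (α ^ 2 + t ^ 2) < 1 := by
      rw [div_lt_one hS0]
      exact hhi
    rcases Real.sign_apply_eq z with hz | hz | hz <;> rw [hz] <;> split_ifs <;>
      constructor <;> linarith
end

section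
/- Let α ∈ (0,1] and let ℓ_α(z) = 1 + z/2 + 𝟙[|z| > 2(1−α)]·(√(α² + (|z|/2 − (1−α))²) − α). Then ℓ_α is twice differentiable at every z with |z| ≠ 2(1−α); its second derivative vanishes for |z| < 2(1−α), and for all z where it exists one has 0 ≤ ℓ_α″(z) ≤ 1/(2α). -/
/-!
Off the kinks `|z| = 2(1-α)`, the function `ℓ` agrees near `z` either with the affine function
`1 + z/2`, or with `1 + z/2 + √(α² + w²) - α` where `w = εz/2 - (1-α)` and `ε = ±1` is the sign
of `z`. With `S = √(α² + w²)`, the latter has derivative `1/2 + εw/(2S)` and second derivative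
`α²/(4S³)`; since `S ≥ α`, this lies between `0` and `1/(4α) ≤ 1/(2α)`. Both derivatives depend
only on the germ of `ℓ` at `z`, so the bounds transfer to `ℓ`.
-/

/-- The smooth function `1 + z/2 + √(α² + (εz/2 - c)²) - α`: for `c = 1 - α`, it is the branch of
`ℓ_α` on `z > 2(1-α)` if `ε = 1`, and on `z < -2(1-α)` if `ε = -1`. -/
noncomputable def outerBranch (α c ε z : ℝ) : ℝ :=
  1 + z / 2 + (Real.sqrt (α ^ 2 + (ε * z / 2 - c) ^ 2) - α)

lemma hasDerivAt_sqrt_branch {α : ℝ} (hα : 0 < α) (c ε z : ℝ) :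
    HasDerivAt (fun z => Real.sqrt (α ^ 2 + (ε * z / 2 - c) ^ 2))
      (ε * (ε * z / 2 - c) / (2 * Real.sqrt (α ^ 2 + (ε * z / 2 - c) ^ 2))) z := by
  have hw : HasDerivAt (fun z : ℝ => ε * z / 2 - c) (ε / 2) z := by
    simpa using (((hasDerivAt_id z).const_mul ε).div_const 2).sub_const c
  have hpos : α ^ 2 + (ε * z / 2 - c) ^ 2 ≠ 0 := by positivity
  have hsq : HasDerivAt (fun z : ℝ => α ^ 2 + (ε * z / 2 - c) ^ 2)
      (ε * (ε * z / 2 - c)) z :=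
    ((hw.pow 2).const_add (α ^ 2)).congr_deriv (by push_cast; ring)
  exact hsq.sqrt hpos

lemma hasDerivAt_outerBranch {α : ℝ} (hα : 0 < α) (c ε z : ℝ) :
    HasDerivAt (outerBranch α c ε)
      (1 / 2 + ε * (ε * z / 2 - c) / (2 * Real.sqrt (α ^ 2 + (ε * z / 2 - c) ^ 2))) z := by
  have h1 : HasDerivAt (fun z : ℝ => 1 + z / 2) (1 / 2) z :=
    ((hasDerivAt_id z).div_const 2).const_add 1
  exact h1.add ((hasDerivAt_sqrt_branch hα c ε z).sub_const α)

lemma hasDerivAt_deriv_outerBranch {α : ℝ} (hα : 0 < α) (c ε z : ℝ) (hε : ε ^ 2 = 1) :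
    HasDerivAt (deriv (outerBranch α c ε))
      (α ^ 2 / (4 * Real.sqrt (α ^ 2 + (ε * z / 2 - c) ^ 2) ^ 3)) z := by
  rw [funext fun y => (hasDerivAt_outerBranch hα c ε y).deriv]
  have hw : HasDerivAt (fun z : ℝ => ε * (ε * z / 2 - c)) (ε * (ε / 2)) z := by
    simpa using ((((hasDerivAt_id z).const_mul ε).div_const 2).sub_const c).const_mul ε
  have hS : 0 < Real.sqrt (α ^ 2 + (ε * z / 2 - c) ^ 2) := Real.sqrt_pos.2 (by positivity)
  have hsq : Real.sqrt (α ^ 2 + (ε * z / 2 - c) ^ 2) ^ 2 = α ^ 2 + (ε * z / 2 - c) ^ 2 :=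
    Real.sq_sqrt (by positivity)
  refine ((hw.div ((hasDerivAt_sqrt_branch hα c ε z).const_mul 2)
    (by positivity)).const_add (1 / 2)).congr_deriv ?_
  generalize Real.sqrt (α ^ 2 + (ε * z / 2 - c) ^ 2) = S at *
  generalize ε * z / 2 - c = w at *
  have hS0 : S ≠ 0 := hS.ne'
  rw [div_eq_div_iff (by positivity) (by positivity)]
  field_simp
  -- With `ε² = 1`, the numerator of the quotient rule is `S² - w² = α²`.
  rw [hε, hsq]
  ring

lemma malpha_of_eventuallyEq_outerBranch {α : ℝ} (hα : 0 < α) {c ε z : ℝ} (hε : ε ^ 2 = 1)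
    {ℓ : ℝ → ℝ} (h : ℓ =ᶠ[nhds z] outerBranch α c ε) :
    DifferentiableAt ℝ ℓ z ∧ DifferentiableAt ℝ (deriv ℓ) z ∧
      0 ≤ deriv (deriv ℓ) z ∧ deriv (deriv ℓ) z ≤ 1 / (2 * α) := by
  have h2 := (hasDerivAt_deriv_outerBranch hα c ε z hε).congr_of_eventuallyEq h.deriv
  refine ⟨((hasDerivAt_outerBranch hα c ε z).congr_of_eventuallyEq h).differentiableAt,
    h2.differentiableAt, ?_, ?_⟩
  · rw [h2.deriv]
    positivity
  · rw [h2.deriv]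
    have hS : α ≤ Real.sqrt (α ^ 2 + (ε * z / 2 - c) ^ 2) :=
      Real.le_sqrt_of_sq_le (by nlinarith [sq_nonneg (ε * z / 2 - c)])
    calc α ^ 2 / (4 * Real.sqrt (α ^ 2 + (ε * z / 2 - c) ^ 2) ^ 3)
        ≤ α ^ 2 / (4 * α ^ 3) := by gcongr
      _ = 1 / (4 * α) := by field_simp
      _ ≤ 1 / (2 * α) := by gcongr; norm_num

/-- For `α ∈ (0,1]`, the function
`ℓ_α(z) = 1 + z/2 + 𝟙[|z| > 2(1−α)]·(√(α² + (|z|/2 − (1−α))²) − α)` is twice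
differentiable at every `z` with `|z| ≠ 2(1−α)`; its second derivative vanishes for
`|z| < 2(1−α)`, and everywhere it exists it satisfies `0 ≤ ℓ_α″(z) ≤ 1/(2α)`. -/
theorem malpha_conjugate_second_derivative
    (α : ℝ) (hα : α ∈ Set.Ioc (0:ℝ) 1)
    (ℓ : ℝ → ℝ)
    (hℓ : ∀ z : ℝ, ℓ z = 1 + z / 2 +
      (if 2 * (1 - α) < |z| then
        Real.sqrt (α ^ 2 + (|z| / 2 - (1 - α)) ^ 2) - α
      else 0)) :
    ∀ z : ℝ, |z| ≠ 2 * (1 - α) →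
      DifferentiableAt ℝ ℓ z ∧
      DifferentiableAt ℝ (deriv ℓ) z ∧
      (|z| < 2 * (1 - α) → deriv (deriv ℓ) z = 0) ∧
      0 ≤ deriv (deriv ℓ) z ∧
      deriv (deriv ℓ) z ≤ 1 / (2 * α) := by
  intro z hz
  obtain ⟨hα0, hα1⟩ := hα
  rcases lt_or_gt_of_ne hz with h | h
  · have hev : ℓ =ᶠ[nhds z] fun y => 1 + y / 2 := by
      filter_upwards [continuous_abs.continuousAt.eventually_lt_const h] with y hy
      rw [hℓ, if_neg hy.le.not_gt, add_zero]
    have hd (y : ℝ) : HasDerivAt (fun y : ℝ => 1 + y / 2) (1 / 2) y :=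
      ((hasDerivAt_id y).div_const 2).const_add 1
    have h2 : HasDerivAt (deriv ℓ) 0 z := by
      refine HasDerivAt.congr_of_eventuallyEq ?_ hev.deriv
      rw [funext fun y => (hd y).deriv]
      exact hasDerivAt_const z _
    refine ⟨((hd z).congr_of_eventuallyEq hev).differentiableAt, h2.differentiableAt,
      fun _ => h2.deriv, h2.deriv.ge, ?_⟩
    rw [h2.deriv]
    positivity
  · have hev := continuous_abs.continuousAt.eventually_const_lt h
    -- On the outer region `z ≠ 0`, so `|·|` is locally `y ↦ εy` with `ε` the sign of `z`.
    have key : ∃ ε : ℝ, ε ^ 2 = 1 ∧ ℓ =ᶠ[nhds z] outerBranch α (1 - α) ε := by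
      have hz0 : z ≠ 0 := abs_pos.1 (by linarith)
      rcases lt_or_gt_of_ne hz0 with hneg | hpos
      · refine ⟨-1, by norm_num, ?_⟩
        filter_upwards [hev, eventually_lt_nhds hneg] with y hy hy0
        rw [hℓ, if_pos hy, abs_of_neg hy0, outerBranch, neg_one_mul]
      · refine ⟨1, by norm_num, ?_⟩
        filter_upwards [hev, eventually_gt_nhds hpos] with y hy hy0
        rw [hℓ, if_pos hy, abs_of_pos hy0, outerBranch, one_mul]
    obtain ⟨ε, hε, hℓε⟩ := key
    obtain ⟨d1, d2, h0, hle⟩ := malpha_of_eventuallyEq_outerBranch hα0 hε hℓε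
    exact ⟨d1, d2, fun h' => absurd h h'.not_gt, h0, hle⟩
end

section
/- Let α ∈ (0,1] and let ℓ_α(z) = 1 + z/2 + 𝟙[|z| > 2(1−α)]·(√(α² + (|z|/2 − (1−α))²) − α), with derivative ℓ_α′. Then for all reals z, z′: ℓ_α(z′) ≤ ℓ_α(z) + ℓ_α′(z)·(z′ − z) + (1/(4α))·(z′ − z)². That is, ℓ_α (and hence the surrogate σ_α(z) = ℓ_α(−z)) is smooth with curvature constant 1/(2α). -/
/-!
With `c = 1 - α`, split `z / 2 = s + p`, where `p` is the projection of `z / 2` onto `[-c, c]` and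
`s` is the soft-thresholding of `z / 2`. Then `ℓ z = 1 + z / 2 + R - α` and
`D z = (1 + s / R) / 2` with `R = √(α² + s²)`, so no indicator or sign remains
(`exists_threshold_split`). Writing `w = (z' - z) / 2`, the claim reduces to
`R' ≤ R + (s / R) w + w² / α`. By AM-GM, `2 R R' ≤ R² + R'²`, and the variational inequality
`(p' - p) s' ≥ 0` of the projection gives `s'² ≤ s² + 2 s w + w²`; together these prove the bound
with `w² / (2 R)`, which is at most `w² / α` because `R ≥ α`.
-/

/-- Soft-thresholding decomposition `z / 2 = s + p`, with `p` the projection of `z / 2` onto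
`[-c, c]`, rewriting the indicator expressions for the loss and its derivative in terms of `s`. -/
lemma exists_threshold_split (α c : ℝ) (hα : 0 < α) (hc : 0 ≤ c) (z : ℝ) :
    ∃ s p : ℝ, z / 2 = s + p ∧ |p| ≤ c ∧ (∀ q : ℝ, |q| ≤ c → 0 ≤ (p - q) * s) ∧
      (if 2 * c < |z| then Real.sqrt (α ^ 2 + (|z| / 2 - c) ^ 2) - α else 0)
        = Real.sqrt (α ^ 2 + s ^ 2) - α ∧
      (if 2 * c < |z| then (1:ℝ) else 0) * Real.sign z *
        ((|z| / 2 - c) / Real.sqrt (α ^ 2 + (|z| / 2 - c) ^ 2))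
        = s / Real.sqrt (α ^ 2 + s ^ 2) := by
  by_cases h : 2 * c < |z|
  · rcases lt_or_ge 0 z with hz | hz
    · rw [abs_of_pos hz] at h ⊢
      refine ⟨z / 2 - c, c, by ring, (abs_of_nonneg hc).le, fun q hq => ?_, by simp [h], ?_⟩
      · exact mul_nonneg (by linarith [(abs_le.1 hq).2]) (by linarith)
      · simp [h, Real.sign_of_pos hz]
    · rw [abs_of_nonpos hz] at h ⊢
      have hz' : z < 0 := by linarith
      have e : (-z / 2 - c) ^ 2 = (z / 2 + c) ^ 2 := by ring
      refine ⟨z / 2 + c, -c, by ring, by rw [abs_neg, abs_of_nonneg hc], fun q hq => ?_, ?_, ?_⟩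
      · exact mul_nonneg_of_nonpos_of_nonpos (by linarith [(abs_le.1 hq).1]) (by linarith)
      · rw [if_pos h, e]
      · rw [if_pos h, e, Real.sign_of_neg hz']
        ring
  · refine ⟨0, z / 2, by ring, ?_, by simp, ?_, by simp [h]⟩
    · rw [abs_div, abs_two]
      linarith
    · simp [h, Real.sqrt_sq hα.le]

/-- For `α ∈ (0,1]`, the function
`ℓ_α(z) = 1 + z/2 + 𝟙[|z| > 2(1−α)]·(√(α² + (|z|/2 − (1−α))²) − α)`, with derivative
`ℓ_α′`, satisfies the smoothness bound
`ℓ_α(z′) ≤ ℓ_α(z) + ℓ_α′(z)(z′ − z) + (1/(4α))(z′ − z)²` for all `z, z′`. -/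
theorem malpha_conjugate_smooth
    (α : ℝ) (hα : α ∈ Set.Ioc (0:ℝ) 1)
    (ℓ D : ℝ → ℝ)
    (hℓ : ∀ z : ℝ, ℓ z = 1 + z / 2 +
      (if 2 * (1 - α) < |z| then
        Real.sqrt (α ^ 2 + (|z| / 2 - (1 - α)) ^ 2) - α
      else 0))
    (hD : ∀ z : ℝ, D z = (1/2) * (1 + (if 2 * (1 - α) < |z| then (1:ℝ) else 0) *
        Real.sign z *
        ((|z| / 2 - (1 - α)) / Real.sqrt (α ^ 2 + (|z| / 2 - (1 - α)) ^ 2)))) :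
    ∀ z z' : ℝ, ℓ z' ≤ ℓ z + D z * (z' - z) + (1 / (4 * α)) * (z' - z) ^ 2 := by
  intro z z'
  obtain ⟨hα0, hα1⟩ := hα
  obtain ⟨s, p, hz, hp, -, hl, hd⟩ := exists_threshold_split α (1 - α) hα0 (by linarith) z
  obtain ⟨s', p', hz', -, hv, hl', -⟩ := exists_threshold_split α (1 - α) hα0 (by linarith) z'
  have hps := hv p hp
  rw [hℓ, hℓ, hD, hl, hl', hd]
  have hR2 : Real.sqrt (α ^ 2 + s ^ 2) ^ 2 = α ^ 2 + s ^ 2 := Real.sq_sqrt (by positivity)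
  have hR2' : Real.sqrt (α ^ 2 + s' ^ 2) ^ 2 = α ^ 2 + s' ^ 2 := Real.sq_sqrt (by positivity)
  have hRα : α ≤ Real.sqrt (α ^ 2 + s ^ 2) := Real.le_sqrt_of_sq_le (by nlinarith [sq_nonneg s])
  set R := Real.sqrt (α ^ 2 + s ^ 2)
  set R' := Real.sqrt (α ^ 2 + s' ^ 2)
  have hR : 0 < R := by linarith
  obtain ⟨w, hw⟩ : ∃ w, w = (z' - z) / 2 := ⟨_, rfl⟩
  have hzw : z' - z = 2 * w := by linarith
  have hs' : s' ^ 2 ≤ s ^ 2 + 2 * s * w + w ^ 2 := by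
    -- `s + w = s' + (p' - p)`, so the right-hand side is `(s' + (p' - p)) ^ 2`.
    have e : s + w = s' + (p' - p) := by linarith
    have : s ^ 2 + 2 * s * w + w ^ 2 = (s' + (p' - p)) ^ 2 := by rw [← e]; ring
    nlinarith [sq_nonneg (p' - p)]
  have key : R' ≤ R + s / R * w + w ^ 2 / (2 * R) := by
    have e : R + s / R * w + w ^ 2 / (2 * R) = (2 * R ^ 2 + 2 * s * w + w ^ 2) / (2 * R) := by
      field_simp
    rw [e, le_div_iff₀ (by positivity)]
    nlinarith [sq_nonneg (R' - R)]
  have hq : w ^ 2 / (2 * R) ≤ w ^ 2 / α :=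
    div_le_div_of_nonneg_left (sq_nonneg w) hα0 (by linarith)
  have e1 : 1 / (4 * α) * (z' - z) ^ 2 = w ^ 2 / α := by
    rw [hzw]
    field_simp
    ring
  have e2 : 1 / 2 * (1 + s / R) * (z' - z) = w + s / R * w := by
    rw [hzw]
    ring
  rw [e1, e2]
  linarith
end

section
/- Let c ∈ [0,1] and α′, α ∈ [0,1] with α ≤ α′·exp(c·(1 − α′)), and let M, M′, E, E′ be reals with 0 ≤ E′ ≤ E ≤ M and M′ ≤ (1 − c)·M. Then α·M′ + (1−α)·E′ ≤ (1 − c·α)·(α′·M + (1−α′)·E). (With c = γ²·w̃/16, this is the one-iteration boosting inequality: under the monotonicity condition on consecutive loss parameters α′ = α_{ℓ−1}, α = α_ℓ, the tuned Mα_ℓ-objective of the grown tree is at most (1 − γ²·w̃·α_ℓ/16) times the Mα_{ℓ−1}-objective of the previous tree.) -/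
/-!
Replacing `M'` by `(1 - c) M` and `E'` by `E`, the claim becomes linear in `(M, E)`, with equality
at `M = E`; the gap between the two sides is `(α' - α (1 - t)) (M - E)` with `t = c (1 - α')`.
It is nonnegative because `α ≤ α' exp t` and `(1 - t) exp t ≤ 1`.
-/

/-- One-iteration boosting inequality with tuned loss parameters: for
`c ∈ [0,1]`, `α′, α ∈ [0,1]` with `α ≤ α′·exp(c·(1 − α′))`, and reals
`0 ≤ E′ ≤ E ≤ M`, `M′ ≤ (1 − c)·M`, one has
`α·M′ + (1−α)·E′ ≤ (1 − c·α)·(α′·M + (1−α′)·E)`. -/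
theorem malpha_objective_one_step_tuned
    (c α' α : ℝ) (hc : c ∈ Set.Icc (0:ℝ) 1)
    (hα' : α' ∈ Set.Icc (0:ℝ) 1) (hα : α ∈ Set.Icc (0:ℝ) 1)
    (hmono : α ≤ α' * Real.exp (c * (1 - α')))
    (M M' E E' : ℝ)
    (hE'0 : 0 ≤ E') (hE'E : E' ≤ E) (hEM : E ≤ M)
    (hM' : M' ≤ (1 - c) * M) :
    α * M' + (1 - α) * E' ≤ (1 - c * α) * (α' * M + (1 - α') * E) := by
  obtain ⟨hc0, hc1⟩ := hc
  obtain ⟨h0', h1'⟩ := hα'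
  obtain ⟨h0, h1⟩ := hα
  have ht : 0 ≤ 1 - c * (1 - α') := by nlinarith
  have hexp : Real.exp (c * (1 - α')) * (1 - c * (1 - α')) ≤ 1 := by
    calc Real.exp (c * (1 - α')) * (1 - c * (1 - α'))
        ≤ Real.exp (c * (1 - α')) * Real.exp (-(c * (1 - α'))) :=
          mul_le_mul_of_nonneg_left (Real.one_sub_le_exp_neg _) (Real.exp_pos _).le
      _ = 1 := by rw [← Real.exp_add]; simp
  have key : α * (1 - c * (1 - α')) ≤ α' := by
    calc α * (1 - c * (1 - α'))
        ≤ α' * Real.exp (c * (1 - α')) * (1 - c * (1 - α')) :=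
          mul_le_mul_of_nonneg_right hmono ht
      _ = α' * (Real.exp (c * (1 - α')) * (1 - c * (1 - α'))) := by ring
      _ ≤ α' := mul_le_of_le_one_right h0' hexp
  have hM : α * M' ≤ α * ((1 - c) * M) := mul_le_mul_of_nonneg_left hM' h0
  have hE : (1 - α) * E' ≤ (1 - α) * E :=
    mul_le_mul_of_nonneg_left hE'E (sub_nonneg.2 h1)
  -- The right side minus `α (1 - c) M + (1 - α) E` is exactly this product.
  have hgap : 0 ≤ (α' - α * (1 - c * (1 - α'))) * (M - E) :=
    mul_nonneg (sub_nonneg.2 key) (sub_nonneg.2 hEM)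
  linarith
end

section
/- Let γ ∈ (0,1], α ∈ (0,1], L ≥ 1, and let (w̃_ℓ)_{ℓ=1..L} be a sequence in [0,1] with w̃_ℓ ≥ 1/ℓ for every ℓ. Let (M_ℓ)_{ℓ=1..L+1} and (E_ℓ)_{ℓ=1..L+1} be reals with 0 ≤ E_ℓ ≤ M_ℓ for all ℓ, E_{ℓ+1} ≤ E_ℓ and M_{ℓ+1} ≤ (1 − γ²·w̃_ℓ·α... correction: M_{ℓ+1} ≤ (1 − γ²·w̃_ℓ/16)·M_ℓ for 1 ≤ ℓ ≤ L, and M_1 ≤ 1. Then for every ξ ∈ (0,1]: if L ≥ (1/ξ)^{16/(α·γ²)}, then E_{L+1} ≤ ξ. (This is the constant-α corollary: splitting the heaviest leaf, whose normalized weight is at least 1/ℓ at iteration ℓ, drives the empirical risk below ξ after at most (1/ξ)^{16/(αγ²)} boosting iterations.) -/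
/-!
Since `1 - x ≤ exp (-x)` and `wt ℓ ≥ 1/ℓ`, the multiplicative decrease of `M` telescopes to
`M (n + 1) ≤ exp (-(γ²/16) H_n)`, where `H_n` is the harmonic number. The bound
`H_L ≥ log (L + 1)` and the lower bound on `L` give `(γ²/16) H_L ≥ log (1/ξ) / α ≥ log (1/ξ)`,
hence `E (L + 1) ≤ M (L + 1) ≤ ξ`.
-/

/-- Constant-α corollary of the decision-tree boosting rate: splitting the
heaviest leaf (so `wt ℓ ≥ 1/ℓ`) drives the empirical risk below `ξ` after at most
`(1/ξ)^{16/(αγ²)}` boosting iterations. -/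
theorem boosting_rate_decision_tree_constant_alpha
    (γ α : ℝ) (hγ : γ ∈ Set.Ioc (0:ℝ) 1) (hα : α ∈ Set.Ioc (0:ℝ) 1)
    (L : ℕ) (hL : 1 ≤ L)
    (wt M E : ℕ → ℝ)
    (hwt : ∀ ℓ, 1 ≤ ℓ → ℓ ≤ L → wt ℓ ∈ Set.Icc (0:ℝ) 1 ∧ 1 / (ℓ : ℝ) ≤ wt ℓ)
    (hEM : ∀ ℓ, 1 ≤ ℓ → ℓ ≤ L + 1 → 0 ≤ E ℓ ∧ E ℓ ≤ M ℓ)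
    (hstep : ∀ ℓ, 1 ≤ ℓ → ℓ ≤ L →
      E (ℓ + 1) ≤ E ℓ ∧ M (ℓ + 1) ≤ (1 - γ ^ 2 * wt ℓ / 16) * M ℓ)
    (hM1 : M 1 ≤ 1) :
    ∀ ξ : ℝ, ξ ∈ Set.Ioc (0:ℝ) 1 →
      (1 / ξ) ^ (16 / (α * γ ^ 2)) ≤ (L : ℝ) →
      E (L + 1) ≤ ξ := by
  intro ξ ⟨hξ0, hξ1⟩ hLξ
  obtain ⟨hγ0, -⟩ := hγ
  obtain ⟨hα0, hα1⟩ := hα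
  have key : ∀ n : ℕ, n ≤ L → M (n + 1) ≤ Real.exp (-(γ ^ 2 / 16 * (harmonic n : ℝ))) := by
    intro n
    induction n with
    | zero => intro _; simpa using hM1
    | succ n ih =>
      intro hn
      have hM0 : 0 ≤ M (n + 1) :=
        (hEM (n + 1) (by omega) (by omega)).1.trans (hEM (n + 1) (by omega) (by omega)).2
      have hw := (hwt (n + 1) (by omega) hn).2
      have hfactor : 1 - γ ^ 2 * wt (n + 1) / 16
          ≤ Real.exp (-(γ ^ 2 / 16 * (1 / ((n + 1 : ℕ) : ℝ)))) := by
        have h1 := mul_le_mul_of_nonneg_left hw (by positivity : 0 ≤ γ ^ 2 / 16)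
        have h2 := Real.add_one_le_exp (-(γ ^ 2 / 16 * (1 / ((n + 1 : ℕ) : ℝ))))
        linarith
      calc M (n + 1 + 1) ≤ (1 - γ ^ 2 * wt (n + 1) / 16) * M (n + 1) :=
            (hstep (n + 1) (by omega) hn).2
        _ ≤ Real.exp (-(γ ^ 2 / 16 * (1 / ((n + 1 : ℕ) : ℝ))))
            * Real.exp (-(γ ^ 2 / 16 * (harmonic n : ℝ))) :=
            mul_le_mul hfactor (ih (by omega)) hM0 (Real.exp_pos _).le
        _ = Real.exp (-(γ ^ 2 / 16 * (harmonic (n + 1) : ℝ))) := by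
            rw [← Real.exp_add, harmonic_succ]
            push_cast
            congr 1
            ring
  have hL0 : (0 : ℝ) < L := by exact_mod_cast hL
  have hlogL : Real.log L ≤ (harmonic L : ℝ) :=
    (Real.log_le_log hL0 (by push_cast; linarith)).trans (log_add_one_le_harmonic L)
  have hlog : 16 / (α * γ ^ 2) * Real.log (1 / ξ) ≤ Real.log L := by
    rw [← Real.log_rpow (by positivity)]
    exact Real.log_le_log (by positivity) hLξ
  have hlogξ : 0 ≤ Real.log (1 / ξ) := Real.log_nonneg (one_le_one_div hξ0 hξ1)
  have hfinal : Real.log (1 / ξ) ≤ γ ^ 2 / 16 * (harmonic L : ℝ) :=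
    calc Real.log (1 / ξ) ≤ Real.log (1 / ξ) / α := le_div_self hlogξ hα0 hα1
      _ = γ ^ 2 / 16 * (16 / (α * γ ^ 2) * Real.log (1 / ξ)) := by field_simp
      _ ≤ γ ^ 2 / 16 * (harmonic L : ℝ) := by
          have := hlog.trans hlogL
          gcongr
  calc E (L + 1) ≤ M (L + 1) := (hEM (L + 1) (by omega) le_rfl).2
    _ ≤ Real.exp (-(γ ^ 2 / 16 * (harmonic L : ℝ))) := key L le_rfl
    _ ≤ Real.exp (-Real.log (1 / ξ)) := Real.exp_le_exp.mpr (neg_le_neg hfinal)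
    _ = ξ := by rw [one_div, Real.log_inv, neg_neg, Real.exp_log hξ0]
end
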